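/- For every integer m ≥ 1, the sequence (A_{n,≤m})_{n≥0} is log-convex, i.e. A_{n,≤m} · A_{n+2,≤m} ≥ (A_{n+1,≤m})² for all n ≥ 0, and the sequence (A_{n,≤m}/n!)_{n≥0} is log-concave, i.e. (A_{n,≤m}/n!)·(A_{n+2,≤m}/(n+2)!) ≤ (A_{n+1,≤m}/(n+1)!)² for all n ≥ 0. -/

import Mathlib

/-- The restricted Bell number `B_{n,≤m}`: the number of partitions of an `n`-element set
into nonempty blocks each of size at most `m`. -/
noncomputable def restrictedBell (n m : ℕ) : ℕ :=
  Nat.card {P : Finpartition (Finset.univ : Finset (Fin n)) // ∀ b ∈ P.parts, b.card ≤ m}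

/-- The associated Bell number `B_{n,≥m}`: the number of partitions of an `n`-element set
into nonempty blocks each of size at least `m`. -/
noncomputable def associatedBell (n m : ℕ) : ℕ :=
  Nat.card {P : Finpartition (Finset.univ : Finset (Fin n)) // ∀ b ∈ P.parts, m ≤ b.card}

/-- The Bell number `B_n`: the number of partitions of an `n`-element set. -/
noncomputable def bell (n : ℕ) : ℕ :=
  Nat.card (Finpartition (Finset.univ : Finset (Fin n)))

/-- The restricted factorial number `A_{n,≤m}`: the number of permutations of `n` elements
all of whose cycles have length at most `m`. -/
noncomputable def restrictedFactorial (n m : ℕ) : ℕ :=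
  Nat.card {σ : Equiv.Perm (Fin n) // ∀ x, Function.minimalPeriod σ x ≤ m}

/-- The associated factorial number `A_{n,≥m}`: the number of permutations of `n` elements
all of whose cycles have length at least `m`. -/
noncomputable def associatedFactorial (n m : ℕ) : ℕ :=
  Nat.card {σ : Equiv.Perm (Fin n) // ∀ x, m ≤ Function.minimalPeriod σ x}

/-!
Put `a n = A_{n,≤m} / n!`, extended by `0` to negative `n`. Removing a point together with its
cycle gives `(n + 1) a (n + 1) = a n + a (n - 1) + ⋯ + a (n - m + 1)`, and subtracting consecutive
instances gives `(n + 1) (a n - a (n + 1)) = a (n - m)`. Hence `a (n - 1) a (n + 1) ≤ a n ^ 2`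
amounts to `(n + 1) a n a (n - 1 - m) ≤ n a (n - 1) a (n - m)`. Expanding `n a n` and
`(n - 1) a (n - 1)` as window sums, this is a sum of log-concavity inequalities at smaller indices,
so log-concavity follows by induction. Comparing the window sums for `n + 1` and `n + 2` term by
term then yields log-convexity of `n! a n`.
-/

open Function Equiv Finset

section WindowSum

variable {K : Type*} [Field K] [LinearOrder K] [IsStrictOrderedRing K] {a : ℤ → K} {m : ℕ}

/-- The coefficients of a positive multiple of `exp (x + x ^ 2 / 2 + ⋯ + x ^ m / m)`, characterised
by the recurrence that compares coefficients in `f' = (1 + x + ⋯ + x ^ (m - 1)) f`. Indexing by `ℤ`,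
with zeros at negative indices, keeps the window of `m` terms uniform. -/
structure IsWindowSumSeq (m : ℕ) (a : ℤ → K) : Prop where
  eq_zero_of_neg : ∀ n < 0, a n = 0
  zero_pos : 0 < a 0
  succ_mul_apply_succ : ∀ n : ℤ, (n + 1) * a (n + 1) = ∑ i ∈ range m, a (n - i)

namespace IsWindowSumSeq

lemma nonneg (ha : IsWindowSumSeq m a) (n : ℤ) : 0 ≤ a n := by
  induction n using Int.strongRec (m := 1) with
  | lt n hn =>
    rcases (show n ≤ 0 by lia).lt_or_eq with hneg | rfl
    · exact (ha.eq_zero_of_neg n hneg).ge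
    · exact ha.zero_pos.le
  | ge n hn ih =>
    have hrec := ha.succ_mul_apply_succ (n - 1)
    rw [sub_add_cancel, Int.cast_sub, Int.cast_one, sub_add_cancel] at hrec
    have hprod : 0 ≤ (n : K) * a n := hrec ▸ sum_nonneg fun i _ ↦ ih _ (by lia)
    exact nonneg_of_mul_nonneg_right hprod (by exact_mod_cast hn)

lemma pos (ha : IsWindowSumSeq m a) (hm : 1 ≤ m) {n : ℤ} (hn : 0 ≤ n) : 0 < a n := by
  induction n, hn using Int.leInduction with
  | base => exact ha.zero_pos
  | succ n hn ih =>
    have hwindow : a n ≤ ∑ i ∈ range m, a (n - i) := by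
      simpa using single_le_sum (f := fun i : ℕ ↦ a (n - i)) (fun i _ ↦ ha.nonneg _)
        (mem_range.mpr hm)
    rw [← ha.succ_mul_apply_succ] at hwindow
    exact pos_of_mul_pos_right (ih.trans_le hwindow) (by exact_mod_cast (by lia : 0 ≤ n + 1))

lemma succ_mul_apply_sub_apply_succ (ha : IsWindowSumSeq m a) (n : ℤ) :
    (n + 1) * (a n - a (n + 1)) = a (n - m) := by
  have hshift : ∑ i ∈ range m, a (n - 1 - i) + a n = ∑ i ∈ range m, a (n - i) + a (n - m) := by
    rw [← sum_range_succ (fun i : ℕ ↦ a (n - i)), sum_range_succ']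
    simp [sub_sub, add_comm]
  have hrec := ha.succ_mul_apply_succ n
  have hrec_pred := ha.succ_mul_apply_succ (n - 1)
  rw [sub_add_cancel, Int.cast_sub, Int.cast_one, sub_add_cancel] at hrec_pred
  linear_combination hrec_pred - hrec + hshift

lemma succ_mul_apply_mul_le (ha : IsWindowSumSeq m a) {n : ℤ}
    (hlt : ∀ j < n, ∀ i ≤ j, a i * a (j + 1) ≤ a (i + 1) * a j) :
    (n + 1) * (a n * a (n - 1 - m)) ≤ n * (a (n - 1) * a (n - m)) := by
  have hcross (i : ℕ) (hi : i ≤ m) :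
      a (n - i) * a (n - 1 - m) ≤ a (n - 1 - i) * a (n - m) := by
    have h := hlt (n - 1 - i) (by lia) (n - 1 - m) (by lia)
    rw [show n - 1 - i + 1 = n - i by ring, show n - 1 - m + 1 = n - m by ring] at h
    linarith
  have hwindow : n * a n * a (n - 1 - m) ≤ (n - 1) * a (n - 1) * a (n - m) := by
    have hrec := ha.succ_mul_apply_succ (n - 1)
    have hrec_pred := ha.succ_mul_apply_succ (n - 2)
    rw [show n - 2 + 1 = n - 1 by ring] at hrec_pred
    push_cast at hrec hrec_pred
    rw [sub_add_cancel, sub_add_cancel] at hrec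
    rw [show (n : K) - 2 + 1 = n - 1 by ring] at hrec_pred
    rw [hrec, hrec_pred, sum_mul, sum_mul]
    refine sum_le_sum fun i hi ↦ ?_
    have h := hcross (i + 1) (mem_range.mp hi)
    push_cast at h
    rwa [show n - (i + 1 : ℤ) = n - 1 - i by ring, show n - 1 - (i + 1 : ℤ) = n - 2 - i by ring]
      at h
  have hhead := hcross 0 m.zero_le
  simp only [Nat.cast_zero, sub_zero] at hhead
  linarith

lemma apply_pred_mul_apply_succ_le_sq (ha : IsWindowSumSeq m a) {n : ℤ} (hn : 1 ≤ n)
    (hlt : ∀ j < n, ∀ i ≤ j, a i * a (j + 1) ≤ a (i + 1) * a j) :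
    a (n - 1) * a (n + 1) ≤ a n ^ 2 := by
  have hdiff := ha.succ_mul_apply_sub_apply_succ n
  have hdiff_pred := ha.succ_mul_apply_sub_apply_succ (n - 1)
  rw [sub_add_cancel, Int.cast_sub, Int.cast_one, sub_add_cancel] at hdiff_pred
  have hgap : (n * (n + 1) : K) * (a n ^ 2 - a (n - 1) * a (n + 1)) =
      n * (a (n - 1) * a (n - m)) - (n + 1) * (a n * a (n - 1 - m)) := by
    linear_combination n * a (n - 1) * hdiff - (n + 1) * a n * hdiff_pred
  have hgap_nonneg := hgap.ge.trans' (sub_nonneg.mpr (ha.succ_mul_apply_mul_le hlt))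
  have hn_pos : (0 : K) < n := by exact_mod_cast hn
  exact sub_nonneg.mp (nonneg_of_mul_nonneg_right hgap_nonneg (mul_pos hn_pos (by linarith)))

theorem apply_mul_apply_succ_le (ha : IsWindowSumSeq m a) (hm : 1 ≤ m) {i j : ℤ} (hij : i ≤ j) :
    a i * a (j + 1) ≤ a (i + 1) * a j := by
  induction j using Int.strongRec (m := 1) generalizing i with
  | lt j hj =>
    rcases hij.lt_or_eq with hlt | rfl
    · rw [ha.eq_zero_of_neg i (by lia), zero_mul]
      exact mul_nonneg (ha.nonneg _) (ha.nonneg _)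
    · exact (mul_comm _ _).le
  | ge j hj ih =>
    rcases hij.lt_or_eq with hlt | rfl
    · have hstep := ha.apply_pred_mul_apply_succ_le_sq hj fun k hk i hik ↦ ih k hk hik
      have hih := ih (j - 1) (by lia) (i := i) (by lia)
      rw [sub_add_cancel] at hih
      refine le_of_mul_le_mul_left ?_ (ha.pos hm (show 0 ≤ j - 1 by lia))
      calc a (j - 1) * (a i * a (j + 1)) = a i * (a (j - 1) * a (j + 1)) := by ring
        _ ≤ a i * a j ^ 2 := mul_le_mul_of_nonneg_left hstep (ha.nonneg i)
        _ = a i * a j * a j := by ring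
        _ ≤ a (i + 1) * a (j - 1) * a j := mul_le_mul_of_nonneg_right hih (ha.nonneg j)
        _ = a (j - 1) * (a (i + 1) * a j) := by ring
    · exact (mul_comm _ _).le

theorem succ_mul_apply_succ_sq_le (ha : IsWindowSumSeq m a) (hm : 1 ≤ m) (n : ℤ) :
    (n + 1) * a (n + 1) ^ 2 ≤ (n + 2) * (a n * a (n + 2)) := by
  have hrec := ha.succ_mul_apply_succ n
  have hrec_succ := ha.succ_mul_apply_succ (n + 1)
  rw [show n + 1 + 1 = n + 2 by ring] at hrec_succ
  push_cast at hrec_succ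
  calc (n + 1) * a (n + 1) ^ 2 = ∑ i ∈ range m, a (n - i) * a (n + 1) := by
        rw [← sum_mul, ← hrec]; ring
    _ ≤ ∑ i ∈ range m, a (n + 1 - i) * a n := by
        refine sum_le_sum fun i _ ↦ ?_
        rw [show n + 1 - (i : ℤ) = n - i + 1 by ring]
        exact ha.apply_mul_apply_succ_le hm (by lia)
    _ = (n + 2) * (a n * a (n + 2)) := by
        rw [← sum_mul, ← hrec_succ]; ring

theorem factorial_mul_apply_succ_sq_le (ha : IsWindowSumSeq m a) (hm : 1 ≤ m) (n : ℕ) :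
    ((n + 1).factorial * a (n + 1 : ℕ)) ^ 2 ≤
      n.factorial * a n * ((n + 2).factorial * a (n + 2 : ℕ)) := by
  have hle := mul_le_mul_of_nonneg_left (ha.succ_mul_apply_succ_sq_le hm n)
    (show (0 : K) ≤ (n + 1) * n.factorial ^ 2 by positivity)
  rw [Nat.factorial_succ (n + 1), Nat.factorial_succ n]
  push_cast at hle ⊢
  linarith

end IsWindowSumSeq

end WindowSum

section CycleInsertion

variable {α β : Type*}

lemma minimalPeriod_apply_of_semiconj {e : α → β} (he : Injective e) {f : α → α} {g : β → β}
    (h : Semiconj e f g) (x : α) : minimalPeriod g (e x) = minimalPeriod f x := by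
  refine minimalPeriod_eq_minimalPeriod_iff.mpr fun n ↦ ?_
  rw [IsPeriodicPt, IsFixedPt, ← h.iterate_right n x]
  exact he.eq_iff

lemma minimalPeriod_perm_pos [Finite α] (σ : Perm α) (x : α) : 0 < minimalPeriod σ x :=
  minimalPeriod_pos_of_mem_periodicPts (σ.injective.mem_periodicPts x)

lemma minimalPeriod_permCongr (e : α ≃ β) (σ : Perm α) (x : α) :
    minimalPeriod (e.permCongr σ) (e x) = minimalPeriod σ x :=
  minimalPeriod_apply_of_semiconj e.injective (fun y ↦ by simp) x

lemma minimalPeriod_optionCongr_none (τ : Perm α) : minimalPeriod (optionCongr τ) none = 1 :=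
  minimalPeriod_eq_one_iff_isFixedPt.mpr rfl

lemma forall_minimalPeriod_optionCongr_le_iff (τ : Perm α) (m : ℕ) :
    (∀ y, minimalPeriod (optionCongr τ) y ≤ m) ↔ 1 ≤ m ∧ ∀ x, minimalPeriod τ x ≤ m := by
  have hsome (x : α) : minimalPeriod (optionCongr τ) (some x) = minimalPeriod τ x :=
    minimalPeriod_apply_of_semiconj (Option.some_injective α) (fun _ ↦ rfl) x
  simp only [Option.forall, minimalPeriod_optionCongr_none, hsome]

variable [DecidableEq α]

/-- The permutation of `Option α` obtained from `τ` by inserting the new point `none` into the cycle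
of `p`, between `τ⁻¹ p` and `p`. -/
def insertBefore (p : α) (τ : Perm α) : Perm (Option α) :=
  Perm.decomposeOption.symm (some p, τ)

lemma insertBefore_none (p : α) (τ : Perm α) : insertBefore p τ none = some p := by
  simp [insertBefore]

lemma insertBefore_some_of_eq {p x : α} {τ : Perm α} (h : τ x = p) :
    insertBefore p τ (some x) = none := by
  simp [insertBefore, h]

lemma insertBefore_some_of_ne {p x : α} {τ : Perm α} (h : τ x ≠ p) :
    insertBefore p τ (some x) = some (τ x) := by
  simp [insertBefore, swap_apply_of_ne_of_ne, h]

lemma iterate_succ_insertBefore_none {p : α} {τ : Perm α} {i : ℕ} (hi : i < minimalPeriod τ p) :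
    (insertBefore p τ)^[i + 1] none = some (τ^[i] p) := by
  induction i with
  | zero => exact insertBefore_none p τ
  | succ i ih =>
    rw [iterate_succ_apply', ih (by lia), iterate_succ_apply' τ]
    refine insertBefore_some_of_ne ?_
    rw [← iterate_succ_apply' τ]
    exact not_isPeriodicPt_of_pos_of_lt_minimalPeriod i.succ_ne_zero hi

lemma minimalPeriod_insertBefore_none [Finite α] (p : α) (τ : Perm α) :
    minimalPeriod (insertBefore p τ) none = minimalPeriod τ p + 1 := by
  obtain ⟨k, hk⟩ := Nat.exists_eq_add_one.mpr (minimalPeriod_perm_pos τ p)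
  have hperiodic : IsPeriodicPt (insertBefore p τ) (minimalPeriod τ p + 1) none := by
    rw [IsPeriodicPt, IsFixedPt, iterate_succ_apply', hk, iterate_succ_insertBefore_none (by lia)]
    refine insertBefore_some_of_eq ?_
    rw [← iterate_succ_apply' τ, Nat.succ_eq_add_one, ← hk, iterate_minimalPeriod]
  refine le_antisymm (hperiodic.minimalPeriod_le (by lia)) (not_lt.mp fun hlt ↦ ?_)
  obtain ⟨j, hj⟩ := Nat.exists_eq_add_one.mpr (minimalPeriod_perm_pos (insertBefore p τ) none)
  have hreturn := iterate_minimalPeriod (f := insertBefore p τ) (x := none)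
  rw [hj, iterate_succ_insertBefore_none (by lia)] at hreturn
  exact Option.some_ne_none _ hreturn

lemma minimalPeriod_insertBefore_some_iterate [Finite α] (p : α) (τ : Perm α) (i : ℕ) :
    minimalPeriod (insertBefore p τ) (some (τ^[i] p)) = minimalPeriod τ p + 1 := by
  rw [← iterate_mod_minimalPeriod_eq,
    ← iterate_succ_insertBefore_none (Nat.mod_lt _ (minimalPeriod_perm_pos τ p)),
    minimalPeriod_apply_iterate ((insertBefore p τ).injective.mem_periodicPts none),
    minimalPeriod_insertBefore_none]

lemma minimalPeriod_insertBefore_some_of_not_sameCycle {p x : α} {τ : Perm α}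
    (h : ¬ τ.SameCycle x p) : minimalPeriod (insertBefore p τ) (some x) = minimalPeriod τ x := by
  have hne (i : ℕ) : τ^[i] x ≠ p := fun hi ↦ h ⟨i, by simpa [Perm.iterate_eq_pow] using hi⟩
  have hiterate (i : ℕ) : (insertBefore p τ)^[i] (some x) = some (τ^[i] x) := by
    induction i with
    | zero => rfl
    | succ i ih =>
      rw [iterate_succ_apply', ih, iterate_succ_apply' τ]
      exact insertBefore_some_of_ne (iterate_succ_apply' τ i x ▸ hne (i + 1))
  refine minimalPeriod_eq_minimalPeriod_iff.mpr fun n ↦ ?_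
  simp only [IsPeriodicPt, IsFixedPt, hiterate, Option.some.injEq]

lemma forall_minimalPeriod_insertBefore_le_iff [Finite α] (p : α) (τ : Perm α) (m : ℕ) :
    (∀ y, minimalPeriod (insertBefore p τ) y ≤ m) ↔
      minimalPeriod τ p + 1 ≤ m ∧ ∀ x, minimalPeriod τ x ≤ m := by
  rw [Option.forall, minimalPeriod_insertBefore_none]
  refine and_congr_right fun hp ↦ forall_congr' fun x ↦ ?_
  by_cases hx : τ.SameCycle x p
  · obtain ⟨i, rfl⟩ := hx.symm.exists_nat_pow_eq
    rw [← Perm.iterate_eq_pow, minimalPeriod_insertBefore_some_iterate,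
      minimalPeriod_apply_iterate (τ.injective.mem_periodicPts p)]
    lia
  · rw [minimalPeriod_insertBefore_some_of_not_sameCycle hx]

lemma card_perm_option_subtype [Fintype α] (P : Perm (Option α) → Prop) :
    Nat.card {σ // P σ} =
      Nat.card {τ : Perm α // P (optionCongr τ)} +
        ∑ p : α, Nat.card {τ : Perm α // P (insertBefore p τ)} := by
  have e : {σ // P σ} ≃ Σ o : Option α, {τ : Perm α // P (Perm.decomposeOption.symm (o, τ))} :=
    (Perm.decomposeOption.subtypeEquiv fun σ ↦ by rw [symm_apply_apply]).trans
      (subtypeProdEquivSigmaSubtype fun o τ ↦ P (Perm.decomposeOption.symm (o, τ)))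
  have hnone (τ : Perm α) : Perm.decomposeOption.symm (none, τ) = optionCongr τ :=
    Equiv.ext (Perm.decomposeOption_symm_of_none_apply τ)
  simp only [Nat.card_congr e, Nat.card_sigma, Fintype.sum_option, hnone, insertBefore]

end CycleInsertion

section CycleCount

variable {α β : Type*}

/-- The number of permutations of `α` all of whose cycles have length at most `m` and whose cycle
through `p` has length at most `r`. Varying `r` with `m` fixed lets points be deleted from the
cycle of `p` one at a time. -/
noncomputable def cycleBoundedCard (p : α) (r m : ℕ) : ℕ :=
  Nat.card {σ : Perm α // minimalPeriod σ p ≤ r ∧ ∀ x, minimalPeriod σ x ≤ m}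

lemma cycleBoundedCard_apply_equiv (e : α ≃ β) (p : α) (r m : ℕ) :
    cycleBoundedCard (e p) r m = cycleBoundedCard p r m := by
  refine (Nat.card_congr (e.permCongr.subtypeEquiv fun σ ↦ ?_)).symm
  rw [minimalPeriod_permCongr, ← e.forall_congr_right]
  simp only [minimalPeriod_permCongr]

lemma cycleBoundedCard_zero [Finite α] (p : α) (m : ℕ) : cycleBoundedCard p 0 m = 0 :=
  have : IsEmpty {σ : Perm α // minimalPeriod σ p ≤ 0 ∧ ∀ x, minimalPeriod σ x ≤ m} :=
    ⟨fun σ ↦ (minimalPeriod_perm_pos σ.1 p).not_ge σ.2.1⟩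
  Nat.card_of_isEmpty

lemma cycleBoundedCard_none_succ [Fintype α] {r m : ℕ} (hr : r + 1 ≤ m) :
    cycleBoundedCard (none : Option α) (r + 1) m =
      Nat.card {τ : Perm α // ∀ x, minimalPeriod τ x ≤ m} + ∑ p : α, cycleBoundedCard p r m := by
  classical
  have hfixed (τ : Perm α) :
      (minimalPeriod (optionCongr τ) none ≤ r + 1 ∧ ∀ y, minimalPeriod (optionCongr τ) y ≤ m) ↔
        ∀ x, minimalPeriod τ x ≤ m := by
    rw [minimalPeriod_optionCongr_none, forall_minimalPeriod_optionCongr_le_iff]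
    exact ⟨fun h ↦ h.2.2, fun h ↦ ⟨by lia, by lia, h⟩⟩
  have hinsert (p : α) (τ : Perm α) :
      (minimalPeriod (insertBefore p τ) none ≤ r + 1 ∧
          ∀ y, minimalPeriod (insertBefore p τ) y ≤ m) ↔
        minimalPeriod τ p ≤ r ∧ ∀ x, minimalPeriod τ x ≤ m := by
    rw [minimalPeriod_insertBefore_none, forall_minimalPeriod_insertBefore_le_iff]
    exact ⟨fun h ↦ ⟨by lia, h.2.2⟩, fun h ↦ ⟨by lia, by lia, h.2⟩⟩
  simp only [cycleBoundedCard, card_perm_option_subtype, hfixed, hinsert]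

lemma cycleBoundedCard_fin_succ {r m : ℕ} (hr : r + 1 ≤ m) {n : ℕ} (p : Fin (n + 1)) :
    cycleBoundedCard p (r + 1) m =
      restrictedFactorial n m + ∑ q : Fin n, cycleBoundedCard q r m := by
  rw [← cycleBoundedCard_apply_equiv (finSuccEquiv' p), finSuccEquiv'_at,
    cycleBoundedCard_none_succ hr, restrictedFactorial]

lemma cycleBoundedCard_fin {r m : ℕ} (hr : r ≤ m) {n : ℕ} (p : Fin (n + 1)) :
    cycleBoundedCard p r m =
      ∑ k ∈ range r, n.descFactorial k * restrictedFactorial (n - k) m := by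
  induction r generalizing n with
  | zero => exact cycleBoundedCard_zero p m
  | succ r ih =>
    rw [cycleBoundedCard_fin_succ hr, sum_range_succ', Nat.descFactorial_zero, one_mul,
      Nat.sub_zero, add_comm]
    congr 1
    cases n with
    | zero => simp
    | succ n =>
      simp only [ih (by lia : r ≤ m), sum_const, card_univ, Fintype.card_fin, smul_eq_mul, mul_sum,
        Nat.succ_descFactorial_succ, Nat.add_sub_add_right, mul_assoc]

end CycleCount

theorem restrictedFactorial_succ (n m : ℕ) :
    restrictedFactorial (n + 1) m =
      ∑ k ∈ range m, n.descFactorial k * restrictedFactorial (n - k) m := by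
  rw [← cycleBoundedCard_fin le_rfl (0 : Fin (n + 1))]
  exact Nat.card_congr (subtypeEquivRight fun σ ↦ ⟨fun h ↦ ⟨h 0, h⟩, And.right⟩)

lemma restrictedFactorial_zero (m : ℕ) : restrictedFactorial 0 m = 1 := by
  simp [restrictedFactorial]

/-- The normalised number `A_{n,≤m} / n!`, extended by `0` to negative `n`. -/
noncomputable def restrictedFactorialCoeff (m : ℕ) : ℤ → ℚ
  | .ofNat n => restrictedFactorial n m / n.factorial
  | .negSucc _ => 0

lemma restrictedFactorialCoeff_natCast (m n : ℕ) :
    restrictedFactorialCoeff m n = restrictedFactorial n m / n.factorial := rfl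

lemma restrictedFactorialCoeff_of_neg (m : ℕ) {n : ℤ} (hn : n < 0) :
    restrictedFactorialCoeff m n = 0 := by
  obtain ⟨k, rfl⟩ := Int.eq_negSucc_of_lt_zero hn
  rfl

lemma factorial_mul_restrictedFactorialCoeff (m n : ℕ) :
    n.factorial * restrictedFactorialCoeff m n = restrictedFactorial n m := by
  rw [restrictedFactorialCoeff_natCast]
  exact mul_div_cancel₀ _ (Nat.cast_ne_zero.mpr n.factorial_ne_zero)

lemma factorial_mul_restrictedFactorialCoeff_sub (m n k : ℕ) :
    n.factorial * restrictedFactorialCoeff m (n - k) =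
      n.descFactorial k * restrictedFactorial (n - k) m := by
  rcases lt_or_ge n k with hlt | hle
  · rw [restrictedFactorialCoeff_of_neg m (by lia), Nat.descFactorial_of_lt hlt]
    simp
  · rw [← Nat.cast_sub hle, ← factorial_mul_restrictedFactorialCoeff,
      ← Nat.factorial_mul_descFactorial hle]
    push_cast
    ring

theorem isWindowSumSeq_restrictedFactorialCoeff (m : ℕ) :
    IsWindowSumSeq m (restrictedFactorialCoeff m) where
  eq_zero_of_neg _ hn := restrictedFactorialCoeff_of_neg m hn
  zero_pos := by
    rw [← Nat.cast_zero (R := ℤ), restrictedFactorialCoeff_natCast, restrictedFactorial_zero]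
    simp
  succ_mul_apply_succ n := by
    rcases lt_or_ge n 0 with hneg | hnonneg
    · rw [sum_eq_zero fun i _ ↦ restrictedFactorialCoeff_of_neg m (by lia)]
      rcases (Int.add_one_le_iff.mpr hneg).lt_or_eq with hlt | heq
      · rw [restrictedFactorialCoeff_of_neg m hlt, mul_zero]
      · rw [show (n : ℚ) + 1 = 0 by exact_mod_cast heq, zero_mul]
    · lift n to ℕ using hnonneg
      have hfactorial : (n.factorial : ℚ) ≠ 0 := Nat.cast_ne_zero.mpr n.factorial_ne_zero
      refine mul_left_cancel₀ hfactorial ?_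
      calc (n.factorial : ℚ) * (((n : ℤ) + 1) * restrictedFactorialCoeff m (n + 1))
          = (n + 1).factorial * restrictedFactorialCoeff m (n + 1 : ℕ) := by
            rw [Nat.factorial_succ]; push_cast; ring
        _ = ∑ k ∈ range m, (n.descFactorial k * restrictedFactorial (n - k) m : ℚ) := by
            rw [factorial_mul_restrictedFactorialCoeff, restrictedFactorial_succ]; push_cast; rfl
        _ = n.factorial * ∑ k ∈ range m, restrictedFactorialCoeff m (n - k) := by
            simp only [mul_sum, factorial_mul_restrictedFactorialCoeff_sub]

/-- For `m ≥ 1`, the sequence `(A_{n,≤m})` is log-convex and `(A_{n,≤m}/n!)` is log-concave. -/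
theorem restrictedFactorial_logConvex_logConcave (m : ℕ) (hm : 1 ≤ m) :
    (∀ n : ℕ,
      (restrictedFactorial (n + 1) m) ^ 2 ≤
        restrictedFactorial n m * restrictedFactorial (n + 2) m) ∧
    (∀ n : ℕ,
      (restrictedFactorial n m : ℚ) / n.factorial *
          ((restrictedFactorial (n + 2) m : ℚ) / (n + 2).factorial) ≤
        ((restrictedFactorial (n + 1) m : ℚ) / (n + 1).factorial) ^ 2) := by
  have ha := isWindowSumSeq_restrictedFactorialCoeff m
  refine ⟨fun n ↦ ?_, fun n ↦ ?_⟩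
  · have hconvex := ha.factorial_mul_apply_succ_sq_le hm n
    simp only [factorial_mul_restrictedFactorialCoeff] at hconvex
    exact_mod_cast hconvex
  · simp only [sq, ← restrictedFactorialCoeff_natCast]
    exact ha.apply_mul_apply_succ_le hm (show (n : ℤ) ≤ n + 1 by lia)
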